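/- arXiv:1512.09006 — 2 statements merged into one kernel-verified Lean document; each statement's English description precedes it below -/
import Mathlib

section
/- There exists an absolute constant c > 0 such that for every finite set W of k positive real numbers, the rational function f(x,y) = (x − y)² / (1 + y²) attains at least c · k^{4/3} distinct values on W × W; that is, |{ (x − y)² / (1 + y²) : x, y ∈ W }| ≥ c · k^{4/3}. -/
/-!
The value `f x y` determines `g x y = (x - y) / √(1 + y ^ 2)` up to sign, so by Cauchy-Schwarz it is
enough to bound the number of solutions of `g x y = g x' y'` in the grid. For fixed `(y, y')` the
solutions `(x, x')` lie on a line of slope `√(1 + y' ^ 2) / √(1 + y ^ 2) > 0`. When `y ≠ y'` the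
line determines `(y, y')`, so these lines pairwise meet at most once. Incidences with such a family
of increasing curves are bounded as in the Szemerédi-Trotter theorem by an elementary argument:
cut the grid into `B × B` cells. An increasing curve visits few cells, and any further point on it
shares its cell with another point of the curve; a pair of points sharing a cell is charged to at
most one curve, and there are few such pairs.
-/

open Finset

section Collisions

variable {α κ : Type*} [DecidableEq κ]

theorem card_filter_product_eq_sum_sq (S : Finset α) (f : α → κ) :
    #{p ∈ S ×ˢ S | f p.1 = f p.2} = ∑ v ∈ S.image f, #{a ∈ S | f a = v} ^ 2 := by
  have maps : ∀ p ∈ ({p ∈ S ×ˢ S | f p.1 = f p.2} : Finset (α × α)), f p.1 ∈ S.image f := by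
    intro p hp
    exact mem_image_of_mem f (mem_product.mp (mem_filter.mp hp).1).1
  rw [card_eq_sum_card_fiberwise maps]
  refine sum_congr rfl fun v _ ↦ ?_
  rw [sq, ← card_product]
  congr 1
  ext p
  simp only [mem_filter, mem_product]
  grind

theorem card_sq_le_card_image_mul (S : Finset α) (f : α → κ) :
    #S ^ 2 ≤ #(S.image f) * #{p ∈ S ×ˢ S | f p.1 = f p.2} := by
  rw [card_filter_product_eq_sum_sq, card_eq_sum_card_image f S]
  exact sq_sum_le_card_mul_sum_sq

theorem card_le_card_image_add_card_offDiag (S : Finset α) (f : α → κ) :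
    #S ≤ #(S.image f) + #{p ∈ S.offDiag | f p.1 = f p.2} := by
  classical
  have split : #{p ∈ S ×ˢ S | f p.1 = f p.2} = #S + #{p ∈ S.offDiag | f p.1 = f p.2} := by
    rw [← diag_union_offDiag, filter_union,
      card_union_of_disjoint (disjoint_filter_filter (disjoint_diag_offDiag S)),
      filter_true_of_mem fun p hp ↦ congrArg f (mem_diag.mp hp).2, diag_card]
  have am_gm : 2 * #S ≤ #(S.image f) + #{p ∈ S ×ˢ S | f p.1 = f p.2} := by
    rw [card_filter_product_eq_sum_sq, card_eq_sum_card_image f S, mul_sum,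
      card_eq_sum_ones (S.image f), ← sum_add_distrib]
    exact sum_le_sum fun v _ ↦ by nlinarith [two_mul_le_add_sq (1 : ℤ) #{a ∈ S | f a = v}]
  omega

end Collisions

section Cells

variable {α β : Type*} [LinearOrder α] [LinearOrder β]

/-- The index of the block containing `x` when the elements of `A`, in increasing order, are cut
into consecutive blocks of length `B`. It makes sense for `x ∉ A` too, which keeps it monotone on
the whole type. -/
def blockIndex (A : Finset α) (B : ℕ) (x : α) : ℕ := #{a ∈ A | a < x} / B

theorem blockIndex_mono (A : Finset α) (B : ℕ) : Monotone (blockIndex A B) := fun _ _ hxy ↦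
  Nat.div_le_div_right <| card_le_card <| monotone_filter_right A fun _ _ ha ↦ ha.trans_le hxy

theorem blockIndex_le (A : Finset α) (B : ℕ) (x : α) : blockIndex A B x ≤ #A / B :=
  Nat.div_le_div_right (card_filter_le _ _)

theorem strictMonoOn_card_filter_lt (A : Finset α) :
    StrictMonoOn (fun x ↦ #{a ∈ A | a < x}) (A : Set α) := fun x hx _ _ hxy ↦
  card_lt_card <| (ssubset_iff_of_subset <|
    monotone_filter_right A fun _ _ ha ↦ ha.trans hxy).mpr
      ⟨x, mem_filter.mpr ⟨hx, hxy⟩, by simp⟩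

theorem card_filter_blockIndex_eq_le (A : Finset α) {B : ℕ} (hB : 0 < B) (i : ℕ) :
    #{x ∈ A | blockIndex A B x = i} ≤ B := by
  have maps : Set.MapsTo (fun x ↦ #{a ∈ A | a < x})
      ({x ∈ A | blockIndex A B x = i} : Finset α) (Ico (i * B) (i * B + B)) := by
    intro x hx
    have hxi : blockIndex A B x = i := (mem_filter.mp hx).2
    rw [blockIndex, Nat.div_eq_iff hB] at hxi
    simp only [coe_Ico, Set.mem_Ico]
    omega
  have inj : Set.InjOn (fun x ↦ #{a ∈ A | a < x})
      ({x ∈ A | blockIndex A B x = i} : Finset α) :=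
    (strictMonoOn_card_filter_lt A).injOn.mono (filter_subset _ A)
  simpa using card_le_card_of_injOn _ maps inj

/-- The pair of indices of the cell containing a point, when the grid `A × A'` is cut into cells of
size `B × B`. -/
def gridCell (A : Finset α) (A' : Finset β) (B : ℕ) : α × β → ℕ × ℕ :=
  Prod.map (blockIndex A B) (blockIndex A' B)

/-- The ordered pairs, equal or not, of points of the grid `A × A'` lying in the same cell. -/
def closePairs (A : Finset α) (A' : Finset β) (B : ℕ) : Finset ((α × β) × (α × β)) :=
  {q ∈ (A ×ˢ A') ×ˢ (A ×ˢ A') | gridCell A A' B q.1 = gridCell A A' B q.2}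

theorem card_filter_gridCell_eq_le (A : Finset α) (A' : Finset β) {B : ℕ} (hB : 0 < B) (c : ℕ × ℕ) :
    #{p ∈ A ×ˢ A' | gridCell A A' B p = c} ≤ B ^ 2 := by
  have product : ({p ∈ A ×ˢ A' | gridCell A A' B p = c} : Finset (α × β)) =
      {x ∈ A | blockIndex A B x = c.1} ×ˢ {x ∈ A' | blockIndex A' B x = c.2} := by
    simp only [gridCell, Prod.ext_iff, Prod.map_fst, Prod.map_snd]
    exact filter_product (blockIndex A B · = c.1) (blockIndex A' B · = c.2)
  rw [product, card_product, sq]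
  exact Nat.mul_le_mul (card_filter_blockIndex_eq_le A hB _) (card_filter_blockIndex_eq_le A' hB _)

theorem card_closePairs_le (A : Finset α) (A' : Finset β) {B : ℕ} (hB : 0 < B) :
    #(closePairs A A' B) ≤ #A * #A' * B ^ 2 := by
  rw [closePairs, card_filter, sum_product, ← card_product]
  refine sum_le_card_nsmul _ _ _ fun p _ ↦ ?_
  simpa only [card_filter, eq_comm (a := gridCell A A' B p)]
    using card_filter_gridCell_eq_le A A' hB _

end Cells

section Chains

variable {α β ι : Type*} [LinearOrder α] [LinearOrder β]

theorem card_le_of_isChain_of_subset_Iic {S : Finset (ℕ × ℕ)} {m n : ℕ}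
    (hS : IsChain (· ≤ ·) (S : Set (ℕ × ℕ))) (hmn : S ⊆ Iic (m, n)) : #S ≤ m + n + 1 := by
  have maps : Set.MapsTo (fun p : ℕ × ℕ ↦ p.1 + p.2) S (range (m + n + 1)) := by
    intro p hp
    have hp' : p.1 ≤ m ∧ p.2 ≤ n := mem_Iic.mp (hmn hp)
    simp only [coe_range, Set.mem_Iio]
    omega
  have inj : Set.InjOn (fun p : ℕ × ℕ ↦ p.1 + p.2) S := by
    intro p hp q hq hpq
    rcases hS.total hp hq with h | h <;> grind [Prod.le_def]
  simpa using card_le_card_of_injOn _ maps inj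

theorem card_image_gridCell_le_of_isChain (A : Finset α) (A' : Finset β) (B : ℕ)
    {C : Finset (α × β)} (hC : IsChain (· ≤ ·) (C : Set (α × β))) :
    #(C.image (gridCell A A' B)) ≤ #A / B + #A' / B + 1 := by
  apply card_le_of_isChain_of_subset_Iic
  · have mono : Monotone (gridCell A A' B) := (blockIndex_mono A B).prodMap (blockIndex_mono A' B)
    rw [coe_image]
    exact hC.image_of_map_rel _ _ _ fun _ _ h ↦ mono h
  · refine image_subset_iff.mpr fun p _ ↦ mem_Iic.mpr ?_
    exact ⟨blockIndex_le A B p.1, blockIndex_le A' B p.2⟩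

theorem sum_card_offDiag_filter_gridCell_le {A : Finset α} {A' : Finset β} (B : ℕ) {I : Finset ι}
    {C : ι → Finset (α × β)} (hsub : ∀ i ∈ I, C i ⊆ A ×ˢ A')
    (hmeet : (I : Set ι).Pairwise fun i j ↦ #(C i ∩ C j) ≤ 1) :
    ∑ i ∈ I, #{q ∈ (C i).offDiag | gridCell A A' B q.1 = gridCell A A' B q.2} ≤
      #(closePairs A A' B) := by
  rw [← card_biUnion]
  · refine card_le_card (biUnion_subset.mpr fun i hi q hq ↦ ?_)
    simp only [mem_filter, mem_offDiag] at hq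
    exact mem_filter.mpr ⟨mem_product.mpr ⟨hsub i hi hq.1.1, hsub i hi hq.1.2.1⟩, hq.2⟩
  · intro i hi j hj hij
    refine disjoint_left.mpr fun q hqi hqj ↦ ?_
    simp only [mem_filter, mem_offDiag] at hqi hqj
    exact hqi.1.2.2 <| card_le_one.mp (hmeet hi hj hij) _
      (mem_inter.mpr ⟨hqi.1.1, hqj.1.1⟩) _ (mem_inter.mpr ⟨hqi.1.2.1, hqj.1.2.1⟩)

theorem sum_card_le_of_isChain_of_card_inter_le_one {A : Finset α} {A' : Finset β} {B : ℕ}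
    (hB : 0 < B) {I : Finset ι} {C : ι → Finset (α × β)} (hsub : ∀ i ∈ I, C i ⊆ A ×ˢ A')
    (hchain : ∀ i ∈ I, IsChain (· ≤ ·) (C i : Set (α × β)))
    (hmeet : (I : Set ι).Pairwise fun i j ↦ #(C i ∩ C j) ≤ 1) :
    ∑ i ∈ I, #(C i) ≤ #I * (#A / B + #A' / B + 1) + #A * #A' * B ^ 2 :=
  calc ∑ i ∈ I, #(C i)
      ≤ ∑ i ∈ I, (#A / B + #A' / B + 1 +
          #{q ∈ (C i).offDiag | gridCell A A' B q.1 = gridCell A A' B q.2}) :=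
        sum_le_sum fun i hi ↦ (card_le_card_image_add_card_offDiag (C i) (gridCell A A' B)).trans <|
          Nat.add_le_add_right (card_image_gridCell_le_of_isChain A A' B (hchain i hi)) _
    _ = #I * (#A / B + #A' / B + 1) +
          ∑ i ∈ I, #{q ∈ (C i).offDiag | gridCell A A' B q.1 = gridCell A A' B q.2} := by
        rw [sum_add_distrib, sum_const, smul_eq_mul]
    _ ≤ #I * (#A / B + #A' / B + 1) + #A * #A' * B ^ 2 :=
        Nat.add_le_add_left
          ((sum_card_offDiag_filter_gridCell_le B hsub hmeet).trans (card_closePairs_le A A' hB)) _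

end Chains

section BlockLength

variable {a y t : ℝ}

theorem exists_mul_cube_eq_sq (ha : 1 ≤ a) (hy : 0 ≤ y) (hay : a ≤ y ^ 2) (hya : y ≤ a ^ 2) :
    ∃ t, 1 ≤ t ∧ t ≤ a ∧ a * t ^ 3 = y ^ 2 := by
  have quotient_nonneg : 0 ≤ y ^ 2 / a := by positivity
  have cube : ((y ^ 2 / a) ^ ((3 : ℕ) : ℝ)⁻¹) ^ 3 = y ^ 2 / a :=
    Real.rpow_inv_natCast_pow quotient_nonneg three_ne_zero
  refine ⟨(y ^ 2 / a) ^ ((3 : ℕ) : ℝ)⁻¹, ?_, ?_, ?_⟩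
  · exact Real.one_le_rpow ((one_le_div₀ (by positivity)).mpr hay) (by positivity)
  · refine le_of_pow_le_pow_left₀ three_ne_zero (by positivity) ?_
    rw [cube, div_le_iff₀ (by positivity)]
    calc y ^ 2 ≤ (a ^ 2) ^ 2 := by gcongr
      _ = a ^ 3 * a := by ring
  · rw [cube]
    field_simp

theorem mul_rpow_two_thirds_eq (ha : 0 ≤ a) (hy : 0 ≤ y) (ht : 0 ≤ t)
    (haty : a * t ^ 3 = y ^ 2) : (a * y) ^ ((2 : ℝ) / 3) = a * t := by
  have cube : (a * y) ^ 2 = (a * t) ^ 3 := by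
    rw [mul_pow, ← haty]
    ring
  rw [div_eq_mul_inv, ← Nat.cast_ofNat, Real.rpow_natCast_mul (by positivity), cube]
  exact Real.pow_rpow_inv_natCast (by positivity) three_ne_zero

-- The choice `a * t ^ 3 = y ^ 2` makes the two main terms comparable when `B` is close to `t`.
theorem blockLength_cost_le (ht : 1 ≤ t) (hta : t ≤ a) (haty : a * t ^ 3 = y ^ 2)
    {B q : ℝ} (htB : t ≤ B) (hBt : B ≤ 2 * t) (hq : q ≤ a / B) :
    a * y + y ^ 2 * (2 * q + 1) + a ^ 2 * B ^ 2 ≤ 8 * (a * t) ^ 2 := by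
  have ha : 1 ≤ a := ht.trans hta
  have hB : 0 ≤ B := by linarith
  have y_le : y ≤ a * t ^ 2 := by
    refine le_of_sq_le_sq ?_ (by positivity)
    calc y ^ 2 = a * t ^ 3 := haty.symm
      _ ≤ a * t ^ 3 * (a * t) :=
        le_mul_of_one_le_right (by positivity) (one_le_mul_of_one_le_of_one_le ha ht)
      _ = (a * t ^ 2) ^ 2 := by ring
  have diagonal : a * y ≤ (a * t) ^ 2 := by
    calc a * y ≤ a * (a * t ^ 2) := by gcongr
      _ = (a * t) ^ 2 := by ring
  have y_sq_le : y ^ 2 ≤ (a * t) ^ 2 := by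
    calc y ^ 2 = a * t ^ 2 * t := by rw [← haty]; ring
      _ ≤ a * t ^ 2 * a := by gcongr
      _ = (a * t) ^ 2 := by ring
  have cells : y ^ 2 * q ≤ (a * t) ^ 2 := by
    calc y ^ 2 * q ≤ y ^ 2 * (a / t) := by gcongr; exact hq.trans (by gcongr)
      _ = (a * t) ^ 2 := by rw [← haty]; field_simp
  have close_pairs : a ^ 2 * B ^ 2 ≤ 4 * (a * t) ^ 2 := by
    calc a ^ 2 * B ^ 2 ≤ a ^ 2 * (2 * t) ^ 2 := by gcongr
      _ = 4 * (a * t) ^ 2 := by ring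
  linarith

theorem exists_blockLength {a y : ℕ} (ha : 0 < a) (hay : a ≤ y ^ 2) (hya : y ≤ a ^ 2) :
    ∃ B : ℕ, 0 < B ∧
      ((a * y + y ^ 2 * (2 * (a / B) + 1) + a ^ 2 * B ^ 2 : ℕ) : ℝ) ≤
        8 * ((a * y : ℝ) ^ ((2 : ℝ) / 3)) ^ 2 := by
  obtain ⟨t, one_le_t, t_le, haty⟩ := exists_mul_cube_eq_sq (a := a) (y := y)
    (mod_cast ha) y.cast_nonneg (mod_cast hay) (mod_cast hya)
  have t_pos : 0 < t := zero_lt_one.trans_le one_le_t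
  refine ⟨⌈t⌉₊, Nat.ceil_pos.mpr t_pos, ?_⟩
  have ceil_le : (⌈t⌉₊ : ℝ) ≤ 2 * t := by linarith [Nat.ceil_lt_add_one t_pos.le]
  rw [mul_rpow_two_thirds_eq a.cast_nonneg y.cast_nonneg t_pos.le haty]
  push_cast
  exact blockLength_cost_le one_le_t t_le haty (Nat.le_ceil t) ceil_le Nat.cast_div_le

end BlockLength

section LevelCurves

variable {α β γ : Type*} [DecidableEq γ] {g : α → β → γ} {A : Finset α} {Y : Finset β}

/-- The points `(x, x')` of the grid `A × A` on the curve `g x y = g x' y'`, where `p = (y, y')`. -/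
def levelCurve (g : α → β → γ) (A : Finset α) (p : β × β) : Finset (α × α) :=
  {q ∈ A ×ˢ A | g q.1 p.1 = g q.2 p.2}

theorem card_filter_product_eq_sum_card_levelCurve (g : α → β → γ) (A : Finset α) (Y : Finset β) :
    #{q ∈ (A ×ˢ Y) ×ˢ (A ×ˢ Y) | g q.1.1 q.1.2 = g q.2.1 q.2.2} =
      ∑ p ∈ Y ×ˢ Y, #(levelCurve g A p) := by
  simp only [levelCurve, card_filter, sum_product]
  rw [sum_comm]
  refine sum_congr rfl fun y _ ↦ ?_
  exact (sum_congr rfl fun _ _ ↦ sum_comm).trans sum_comm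

theorem card_levelCurve_diag_le {y : β} (hg : Function.Injective (g · y)) :
    #(levelCurve g A (y, y)) ≤ #A := by
  refine card_le_card_of_injOn Prod.fst (fun q hq ↦ ?_) fun q hq r hr hqr ↦ ?_
  · exact (mem_product.mp (mem_filter.mp hq).1).1
  · have hgq : g q.1 y = g q.2 y := (mem_filter.mp hq).2
    have hgr : g r.1 y = g r.2 y := (mem_filter.mp hr).2
    exact Prod.ext hqr (hg (hgq.symm.trans ((congrArg (g · y) hqr).trans hgr)))

theorem isChain_levelCurve [LinearOrder α] [Preorder γ] {p : β × β}
    (hfst : Monotone (g · p.1)) (hsnd : StrictMono (g · p.2)) :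
    IsChain (· ≤ ·) (levelCurve g A p : Set (α × α)) := by
  have le_of_fst_le : ∀ q ∈ levelCurve g A p, ∀ r ∈ levelCurve g A p, q.1 ≤ r.1 → q ≤ r := by
    intro q hq r hr hqr
    refine ⟨hqr, hsnd.le_iff_le.mp ?_⟩
    simpa only [(mem_filter.mp hq).2, (mem_filter.mp hr).2] using hfst hqr
  intro q hq r hr _
  exact (le_total q.1 r.1).imp (le_of_fst_le q hq r hr) (le_of_fst_le r hr q hq)

theorem sum_card_levelCurve_le [LinearOrder α] [Preorder γ]
    (hmono : ∀ y ∈ Y, StrictMono (g · y))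
    (hmeet : (Y.offDiag : Set (β × β)).Pairwise fun p q ↦
      #(levelCurve g A p ∩ levelCurve g A q) ≤ 1) {B : ℕ} (hB : 0 < B) :
    ∑ p ∈ Y ×ˢ Y, #(levelCurve g A p) ≤
      #A * #Y + #Y ^ 2 * (2 * (#A / B) + 1) + #A ^ 2 * B ^ 2 := by
  classical
  have diag : ∑ p ∈ Y.diag, #(levelCurve g A p) ≤ #A * #Y := by
    rw [sum_diag, mul_comm]
    exact sum_le_card_nsmul _ _ _ fun y hy ↦ card_levelCurve_diag_le (hmono y hy).injective
  have offDiag : ∑ p ∈ Y.offDiag, #(levelCurve g A p) ≤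
      #Y.offDiag * (#A / B + #A / B + 1) + #A * #A * B ^ 2 := by
    refine sum_card_le_of_isChain_of_card_inter_le_one hB (fun _ _ ↦ filter_subset _ _)
      (fun p hp ↦ ?_) hmeet
    obtain ⟨hp₁, hp₂, -⟩ := mem_offDiag.mp hp
    exact isChain_levelCurve (hmono _ hp₁).monotone (hmono _ hp₂)
  have card_offDiag : #Y.offDiag ≤ #Y ^ 2 := by
    rw [offDiag_card, sq]
    exact Nat.sub_le _ _
  rw [← diag_union_offDiag, sum_union (disjoint_diag_offDiag Y)]
  calc _ ≤ #A * #Y + (#Y.offDiag * (#A / B + #A / B + 1) + #A * #A * B ^ 2) :=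
        Nat.add_le_add diag offDiag
    _ ≤ #A * #Y + (#Y ^ 2 * (#A / B + #A / B + 1) + #A * #A * B ^ 2) := by gcongr
    _ = _ := by ring

theorem card_mul_card_sq_le_card_image₂_mul [LinearOrder α] [Preorder γ]
    (hmono : ∀ y ∈ Y, StrictMono (g · y))
    (hmeet : (Y.offDiag : Set (β × β)).Pairwise fun p q ↦
      #(levelCurve g A p ∩ levelCurve g A q) ≤ 1) {B : ℕ} (hB : 0 < B) :
    (#A * #Y) ^ 2 ≤ #(image₂ g A Y) *
      (#A * #Y + #Y ^ 2 * (2 * (#A / B) + 1) + #A ^ 2 * B ^ 2) :=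
  calc (#A * #Y) ^ 2 = #(A ×ˢ Y) ^ 2 := by rw [card_product]
    _ ≤ #(image₂ g A Y) * #{q ∈ (A ×ˢ Y) ×ˢ (A ×ˢ Y) | g q.1.1 q.1.2 = g q.2.1 q.2.2} :=
        card_sq_le_card_image_mul (A ×ˢ Y) (Function.uncurry g)
    _ ≤ _ := by
        rw [card_filter_product_eq_sum_card_levelCurve]
        exact Nat.mul_le_mul_left _ (sum_card_levelCurve_le hmono hmeet hB)

theorem rpow_card_mul_card_le_card_image₂ [LinearOrder α] [Preorder γ]
    (hmono : ∀ y ∈ Y, StrictMono (g · y))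
    (hmeet : (Y.offDiag : Set (β × β)).Pairwise fun p q ↦
      #(levelCurve g A p ∩ levelCurve g A q) ≤ 1)
    (hAY : #A ≤ #Y ^ 2) (hYA : #Y ≤ #A ^ 2) :
    (#A * #Y : ℝ) ^ ((2 : ℝ) / 3) ≤ 8 * #(image₂ g A Y) := by
  obtain hA | hA := Nat.eq_zero_or_pos #A
  · rw [hA, Nat.cast_zero, zero_mul, Real.zero_rpow (by norm_num)]
    positivity
  have hY : 0 < #Y := Nat.pos_of_ne_zero fun h ↦ by simp_all
  obtain ⟨B, hB, hsize⟩ := exists_blockLength hA hAY hYA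
  have hcount := card_mul_card_sq_le_card_image₂_mul hmono hmeet hB
  generalize #A * #Y + #Y ^ 2 * (2 * (#A / B) + 1) + #A ^ 2 * B ^ 2 = N at hcount hsize
  have hcount' : (#A * #Y : ℝ) ^ 2 ≤ #(image₂ g A Y) * N := mod_cast hcount
  have cube : (#A * #Y : ℝ) ^ 2 = ((#A * #Y : ℝ) ^ ((2 : ℝ) / 3)) ^ 3 := by
    rw [← Real.rpow_mul_natCast (by positivity)]
    norm_num
  set r := (#A * #Y : ℝ) ^ ((2 : ℝ) / 3)
  have r_pos : 0 < r := by positivity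
  refine le_of_mul_le_mul_left ?_ (pow_pos r_pos 2)
  calc r ^ 2 * r = (#A * #Y : ℝ) ^ 2 := by rw [cube]; ring
    _ ≤ (#(image₂ g A Y) : ℝ) * N := hcount'
    _ ≤ #(image₂ g A Y) * (8 * r ^ 2) := by gcongr
    _ = r ^ 2 * (8 * #(image₂ g A Y)) := by ring

end LevelCurves

theorem card_le_two_mul_card_image_sq {R : Type*} [CommRing R] [NoZeroDivisors R] [DecidableEq R]
    (S : Finset R) : #S ≤ 2 * #(S.image (· ^ 2)) := by
  refine card_le_mul_card_image S 2 fun v hv ↦ ?_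
  obtain ⟨a, -, rfl⟩ := mem_image.mp hv
  refine (card_le_card fun b hb ↦ ?_).trans (card_le_two (a := a) (b := -a))
  simpa [sq_eq_sq_iff_eq_or_eq_neg] using (mem_filter.mp hb).2

section NormalizedDiff

/-- The signed square root of `(x - y) ^ 2 / (1 + y ^ 2)`. -/
noncomputable def normalizedDiff (x y : ℝ) : ℝ := (x - y) / √(1 + y ^ 2)

/-- The slope of the line `normalizedDiff x y = normalizedDiff x' y'` in the `(x, x')`-plane. -/
noncomputable def lineSlope (y y' : ℝ) : ℝ := √(1 + y' ^ 2) / √(1 + y ^ 2)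

theorem sqrt_one_add_sq_pos (y : ℝ) : 0 < √(1 + y ^ 2) := by positivity

theorem normalizedDiff_sq (x y : ℝ) : normalizedDiff x y ^ 2 = (x - y) ^ 2 / (1 + y ^ 2) := by
  rw [normalizedDiff, div_pow, Real.sq_sqrt (by positivity)]

theorem strictMono_normalizedDiff (y : ℝ) : StrictMono (normalizedDiff · y) := fun _ _ h ↦
  div_lt_div_of_pos_right (sub_lt_sub_right h y) (sqrt_one_add_sq_pos y)

theorem lineSlope_pos (y y' : ℝ) : 0 < lineSlope y y' :=
  div_pos (sqrt_one_add_sq_pos y') (sqrt_one_add_sq_pos y)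

theorem one_add_sq_eq_lineSlope_sq_mul (y y' : ℝ) :
    1 + y' ^ 2 = lineSlope y y' ^ 2 * (1 + y ^ 2) := by
  rw [lineSlope, div_pow, Real.sq_sqrt (by positivity), Real.sq_sqrt (by positivity)]
  field_simp

theorem normalizedDiff_eq_iff {x y x' y' : ℝ} :
    normalizedDiff x y = normalizedDiff x' y' ↔ x' = lineSlope y y' * (x - y) + y' := by
  have hy := (sqrt_one_add_sq_pos y).ne'
  have hy' := (sqrt_one_add_sq_pos y').ne'
  rw [normalizedDiff, normalizedDiff, lineSlope, div_eq_div_iff hy hy', ← sub_eq_iff_eq_add,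
    div_mul_eq_mul_div, eq_div_iff hy]
  constructor <;> intro h <;> linarith

theorem eq_of_lineSlope_eq_of_intercept_eq {y y' z z' : ℝ} (hy : y ≠ y')
    (hslope : lineSlope y y' = lineSlope z z')
    (hintercept : y' - lineSlope y y' * y = z' - lineSlope z z' * z) : y = z ∧ y' = z' := by
  have hm := lineSlope_pos y y'
  have hyy := one_add_sq_eq_lineSlope_sq_mul y y'
  have hzz := one_add_sq_eq_lineSlope_sq_mul z z'
  rw [← hslope] at hintercept hzz
  generalize lineSlope y y' = m at *
  obtain ⟨b, hb⟩ : ∃ b, b = y' - m * y := ⟨_, rfl⟩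
  obtain rfl : y' = m * y + b := by linarith
  obtain rfl : z' = m * z + b := by linarith
  have intercept_ne_zero : b ≠ 0 := by
    rintro rfl
    obtain rfl : m = 1 := by
      rw [← sq_eq_sq₀ hm.le zero_le_one]
      linarith
    exact hy (by ring)
  have hyz : 2 * (m * b) * y = 2 * (m * b) * z := by linarith
  have : y = z := mul_left_cancel₀ (by positivity) hyz
  exact ⟨this, by rw [this]⟩

theorem card_levelCurve_normalizedDiff_inter_le_one (A : Finset ℝ) {p q : ℝ × ℝ}
    (hp : p.1 ≠ p.2) (hpq : p ≠ q) :
    #(levelCurve normalizedDiff A p ∩ levelCurve normalizedDiff A q) ≤ 1 := by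
  refine card_le_one.mpr fun u hu v hv ↦ ?_
  by_contra huv
  simp only [levelCurve, mem_inter, mem_filter, normalizedDiff_eq_iff] at hu hv
  obtain ⟨⟨-, hup⟩, -, huq⟩ := hu
  obtain ⟨⟨-, hvp⟩, -, hvq⟩ := hv
  have fst_ne : u.1 - v.1 ≠ 0 := by
    intro h
    have h' : u.1 = v.1 := sub_eq_zero.mp h
    exact huv (Prod.ext h' (by rw [hup, hvp, h']))
  have slope_eq : lineSlope p.1 p.2 = lineSlope q.1 q.2 :=
    mul_right_cancel₀ fst_ne (by linarith)
  have intercept_eq : p.2 - lineSlope p.1 p.2 * p.1 = q.2 - lineSlope q.1 q.2 * q.1 := by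
    rw [slope_eq] at hup ⊢
    linarith
  exact hpq (Prod.ext_iff.mpr (eq_of_lineSlope_eq_of_intercept_eq hp slope_eq intercept_eq))

theorem card_image₂_normalizedDiff_le (A Y : Finset ℝ) :
    #(image₂ normalizedDiff A Y) ≤
      2 * {v : ℝ | ∃ x ∈ A, ∃ y ∈ Y, v = (x - y) ^ 2 / (1 + y ^ 2)}.ncard := by
  have image_sq : {v : ℝ | ∃ x ∈ A, ∃ y ∈ Y, v = (x - y) ^ 2 / (1 + y ^ 2)} =
      ((image₂ normalizedDiff A Y).image (· ^ 2) : Finset ℝ) := by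
    ext v
    simp [normalizedDiff_sq, and_assoc, eq_comm]
  rw [image_sq, Set.ncard_coe_finset]
  exact card_le_two_mul_card_image_sq _

end NormalizedDiff

theorem mul_self_rpow_two_thirds {x : ℝ} (hx : 0 ≤ x) :
    (x * x) ^ ((2 : ℝ) / 3) = x ^ ((4 : ℝ) / 3) := by
  rw [← sq, ← Real.rpow_natCast_mul hx]
  norm_num

theorem expander_rational_function_general :
    ∃ c : ℝ, 0 < c ∧ ∀ A Y : Finset ℝ, #A ≤ #Y ^ 2 → #Y ≤ #A ^ 2 →
      c * (#A * #Y : ℝ) ^ ((2 : ℝ) / 3) ≤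
        {v : ℝ | ∃ x ∈ A, ∃ y ∈ Y, v = (x - y) ^ 2 / (1 + y ^ 2)}.ncard := by
  refine ⟨1 / 16, by norm_num, fun A Y hAY hYA ↦ ?_⟩
  have lower : (#A * #Y : ℝ) ^ ((2 : ℝ) / 3) ≤ 8 * #(image₂ normalizedDiff A Y) := by
    refine rpow_card_mul_card_le_card_image₂ (fun y _ ↦ strictMono_normalizedDiff y)
      (fun p hp q _ hpq ↦ ?_) hAY hYA
    exact card_levelCurve_normalizedDiff_inter_le_one A (mem_offDiag.mp hp).2.2 hpq
  have upper : (#(image₂ normalizedDiff A Y) : ℝ) ≤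
      2 * {v : ℝ | ∃ x ∈ A, ∃ y ∈ Y, v = (x - y) ^ 2 / (1 + y ^ 2)}.ncard :=
    mod_cast card_image₂_normalizedDiff_le A Y
  linarith

theorem expander_rational_function :
    ∃ c : ℝ, 0 < c ∧
      ∀ (k : ℕ) (W : Finset ℝ), W.card = k → (∀ x ∈ W, 0 < x) →
        c * (k : ℝ) ^ ((4 : ℝ) / 3) ≤
          (({v : ℝ | ∃ x ∈ W, ∃ y ∈ W, v = (x - y) ^ 2 / (1 + y ^ 2)}).ncard : ℝ) := by
  obtain ⟨c, hc, h⟩ := expander_rational_function_general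
  refine ⟨c, hc, fun k W hk _ ↦ ?_⟩
  simpa only [hk, mul_self_rpow_two_thirds k.cast_nonneg] using
    h W W (Nat.le_self_pow two_ne_zero _) (Nat.le_self_pow two_ne_zero _)
end

section
/- There exists an absolute constant A > 0 such that for every set P of m points and every set L of n lines in ℝ², the number of pairs (p,ℓ) ∈ P × L with d(p,ℓ) = 1 is at most A · ( m^{2/3} n^{2/3} + m + n ). -/
noncomputable section

abbrev Pt2 := EuclideanSpace ℝ (Fin 2)

/-- A line in the plane: the set of points `a + t • v` for a nonzero direction `v`. -/
def IsLine2 (l : Set Pt2) : Prop :=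
  ∃ a v : Pt2, v ≠ 0 ∧ l = {x : Pt2 | ∃ t : ℝ, x = a + t • v}

/-!
A point at distance `d` from a line `l` lies on one of the translates of `l` by `±d` times a unit
normal that depends only on the direction of `l`. Such a translation preserves directions, hence
distinct lines have distinct translates, and the pairs at distance `d` are counted by two point–line
incidence problems.

Incidences are bounded by Székely's argument. Joining consecutive points on each line gives a graph
with almost as many edges as there are incidences and at most one crossing per pair of lines. A
plane graph on `V` has at most `3 * #V` edges: the steepest edge at each left endpoint is charged to
that endpoint, and any other edge to the first vertex that a sweep to the right meets in the wedge
between it and the next steeper edge. A vertex is charged by at most two such edges, one from the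
wedges with the vertex on the upper edge and one from the others. Averaging over random induced
subgraphs turns this bound into the crossing inequality.
-/

open Finset
open scoped Pointwise Topology

section Sampling

variable {R α ι : Type*} [CommRing R] [DecidableEq α]

/-- The probability that the random subset of `V` containing each element independently with
probability `p` equals `S`, for `S ⊆ V`. -/
def samplingWeight (p : R) (V S : Finset α) : R := p ^ #S * (1 - p) ^ (#V - #S)

theorem sum_samplingWeight_of_subset (p : R) {V T : Finset α} (hT : T ⊆ V) :
    ∑ S ∈ V.powerset with T ⊆ S, samplingWeight p V S = p ^ #T := by
  have supersets : {S ∈ V.powerset | T ⊆ S} = (V \ T).powerset.image (T ∪ ·) := by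
    rw [← Icc_eq_image_powerset hT]
    ext S
    simp only [mem_filter, mem_powerset, mem_Icc, and_comm]
  have weight_union : ∀ U ∈ (V \ T).powerset, samplingWeight p V (T ∪ U) =
      p ^ #T * (p ^ #U * (1 - p) ^ (#(V \ T) - #U)) := fun U hU ↦ by
    have hTU : Disjoint T U := disjoint_sdiff.mono_right (mem_powerset.1 hU)
    rw [samplingWeight, card_union_of_disjoint hTU, pow_add, mul_assoc, card_sdiff_of_subset hT,
      Nat.sub_sub]
  have union_injOn : Set.InjOn (T ∪ ·) ((V \ T).powerset : Set (Finset α)) := fun U hU W hW h ↦ by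
    have hU := disjoint_sdiff.mono_right (mem_powerset.1 hU)
    have hW := disjoint_sdiff.mono_right (mem_powerset.1 hW)
    simpa only [union_sdiff_cancel_left hU, union_sdiff_cancel_left hW] using congrArg (· \ T) h
  rw [supersets, sum_image union_injOn, sum_congr rfl weight_union, ← mul_sum,
    sum_pow_mul_eq_add_pow, add_sub_cancel, one_pow, mul_one]

theorem sum_samplingWeight_mul_card (p : R) {V : Finset α} {F : Finset ι} {T : ι → Finset α}
    {k : ℕ} (hT : ∀ i ∈ F, T i ⊆ V) (hk : ∀ i ∈ F, #(T i) = k) :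
    ∑ S ∈ V.powerset, samplingWeight p V S * #{i ∈ F | T i ⊆ S} = p ^ k * #F :=
  calc ∑ S ∈ V.powerset, samplingWeight p V S * #{i ∈ F | T i ⊆ S}
    _ = ∑ S ∈ V.powerset, ∑ i ∈ F, if T i ⊆ S then samplingWeight p V S else 0 := by
      simp only [card_filter, Nat.cast_sum, mul_sum, Nat.cast_ite, Nat.cast_one, Nat.cast_zero,
        mul_ite, mul_one, mul_zero]
    _ = ∑ i ∈ F, ∑ S ∈ V.powerset with T i ⊆ S, samplingWeight p V S := by
      rw [sum_comm]
      simp only [sum_filter]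
    _ = ∑ _ ∈ F, p ^ k := sum_congr rfl fun _ hi ↦ by
      rw [sum_samplingWeight_of_subset p (hT _ hi), hk _ hi]
    _ = p ^ k * #F := by rw [sum_const, nsmul_eq_mul, mul_comm]

end Sampling

/-- The non-vertical line `y = slope * x + intercept`. -/
@[ext] structure GraphLine where
  slope : ℝ
  intercept : ℝ

namespace GraphLine

instance : DecidableEq GraphLine := Classical.decEq _

instance : CoeFun GraphLine fun _ ↦ ℝ → ℝ where
  coe ℓ x := ℓ.slope * x + ℓ.intercept

/-- The set of points of a non-vertical line. -/
def graph (ℓ : GraphLine) : Set Pt2 := {z | z 1 = ℓ (z 0)}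

variable {ℓ ℓ' : GraphLine} {x y : ℝ}

theorem continuous (ℓ : GraphLine) : Continuous ℓ := by fun_prop

theorem eq_of_apply_eq (hxy : x ≠ y) (hx : ℓ x = ℓ' x) (hy : ℓ y = ℓ' y) : ℓ = ℓ' := by
  have hslope : ℓ.slope = ℓ'.slope :=
    mul_right_cancel₀ (sub_ne_zero.2 hxy) (by linear_combination hx - hy)
  rw [hslope] at hx
  exact GraphLine.ext hslope (add_left_cancel hx)

theorem lt_iff_slope_lt (hx : ℓ x = ℓ' x) (hxy : x < y) : ℓ y < ℓ' y ↔ ℓ.slope < ℓ'.slope := by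
  have : ℓ' y - ℓ y = (ℓ'.slope - ℓ.slope) * (y - x) := by linear_combination -hx
  rw [← sub_pos, this, mul_pos_iff_of_pos_right (sub_pos.2 hxy), sub_pos]

theorem exists_apply_eq (hxy : x < y) (hx : ℓ' x < ℓ x) (hy : ℓ y < ℓ' y) :
    ∃ t ∈ Set.Ioo x y, ℓ t = ℓ' t := by
  obtain ⟨t, ht, h⟩ := intermediate_value_Ioo hxy.le
    (ℓ'.continuous.sub ℓ.continuous).continuousOn ⟨sub_neg.2 hx, sub_pos.2 hy⟩
  exact ⟨t, ht, (sub_eq_zero.1 h).symm⟩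

theorem toLp_eq_of_mem_graph (ℓ : GraphLine) {z : Pt2} (hz : z ∈ ℓ.graph) :
    !₂[z 0, ℓ (z 0)] = z := by
  ext i
  fin_cases i
  · rfl
  · exact hz.symm

theorem graph_injective : Function.Injective graph := fun ℓ ℓ' h ↦ by
  have hval : ∀ x, ℓ x = ℓ' x := fun x ↦ (h ▸ rfl : !₂[x, ℓ x] ∈ ℓ'.graph)
  exact eq_of_apply_eq zero_ne_one (hval 0) (hval 1)

end GraphLine

/-- A segment of positive length on a non-vertical line, given by the line and the abscissae of
its endpoints. -/
@[ext] structure Segment where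
  line : GraphLine
  lo : ℝ
  hi : ℝ
  lo_lt_hi : lo < hi

namespace Segment

instance : DecidableEq Segment := Classical.decEq _

/-- The left endpoint of a segment. -/
def left (e : Segment) : Pt2 := !₂[e.lo, e.line e.lo]

/-- The right endpoint of a segment. -/
def right (e : Segment) : Pt2 := !₂[e.hi, e.line e.hi]

/-- The set of points of a segment other than its endpoints. -/
def interior (e : Segment) : Set Pt2 := {z ∈ e.line.graph | z 0 ∈ Set.Ioo e.lo e.hi}

/-- `e` is an edge on the vertex set `V`: its endpoints are vertices, and it passes through no
other vertex. -/
structure IsEdge (V : Finset Pt2) (e : Segment) : Prop where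
  left_mem : e.left ∈ V
  right_mem : e.right ∈ V
  interior_disjoint : ∀ z ∈ V, z ∉ e.interior

variable {V : Finset Pt2} {e f : Segment}

theorem toLp_mem_interior {x y : ℝ} :
    !₂[x, y] ∈ e.interior ↔ y = e.line x ∧ x ∈ Set.Ioo e.lo e.hi :=
  Iff.rfl

theorem apply_lo_eq_of_left_eq (h : e.left = f.left) : e.line e.lo = f.line e.lo := by
  have hlo : e.lo = f.lo := congr($h 0)
  rw [hlo]
  simpa only [hlo] using (congr($h 1) : e.line e.lo = f.line f.lo)

theorem IsEdge.hi_le_hi (he : e.IsEdge V) (hf : f.IsEdge V) (hline : e.line = f.line)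
    (h : f.lo < e.hi) : f.hi ≤ e.hi := by
  by_contra! hlt
  exact hf.interior_disjoint _ he.right_mem (toLp_mem_interior.2 ⟨by rw [hline], h, hlt⟩)

theorem IsEdge.lo_le_lo (he : e.IsEdge V) (hf : f.IsEdge V) (hline : e.line = f.line)
    (h : e.lo < f.hi) : e.lo ≤ f.lo := by
  by_contra! hlt
  exact hf.interior_disjoint _ he.left_mem (toLp_mem_interior.2 ⟨by rw [hline], hlt, h⟩)

theorem IsEdge.eq_of_line_eq (he : e.IsEdge V) (hf : f.IsEdge V) (hline : e.line = f.line)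
    (hef : e.lo < f.hi) (hfe : f.lo < e.hi) : e = f :=
  Segment.ext hline
    (le_antisymm (he.lo_le_lo hf hline hef) (hf.lo_le_lo he hline.symm hfe))
    (le_antisymm (hf.hi_le_hi he hline.symm hef) (he.hi_le_hi hf hline hfe))

theorem IsEdge.eq_of_left_eq_of_slope_eq (he : e.IsEdge V) (hf : f.IsEdge V)
    (hleft : e.left = f.left) (hslope : e.line.slope = f.line.slope) : e = f := by
  have hlo : e.lo = f.lo := congr($hleft 0)
  have happly := apply_lo_eq_of_left_eq hleft
  rw [hslope] at happly
  exact he.eq_of_line_eq hf (GraphLine.ext hslope (add_left_cancel happly))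
    (hlo.trans_lt f.lo_lt_hi) (hlo.symm.trans_lt e.lo_lt_hi)

theorem interior_disjoint_iff : Disjoint e.interior f.interior ↔
    ∀ x ∈ Set.Ioo e.lo e.hi, x ∈ Set.Ioo f.lo f.hi → e.line x ≠ f.line x := by
  rw [Set.disjoint_left]
  constructor
  · exact fun h x hxe hxf heq ↦
      h (toLp_mem_interior.2 ⟨rfl, hxe⟩) (toLp_mem_interior.2 ⟨heq, hxf⟩)
  · exact fun h z hze hzf ↦ h _ hze.2 hzf.2 (hze.1.symm.trans hzf.1)

theorem line_le_of_line_lt (hdisj : Disjoint e.interior f.interior) {s x : ℝ} (hes : e.lo ≤ s)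
    (hfs : f.lo ≤ s) (hsx : s < x) (hxe : x < e.hi) (hxf : x < f.hi) (hlt : e.line x < f.line x) :
    e.line s ≤ f.line s := by
  by_contra! hgt
  obtain ⟨t, ⟨hst, htx⟩, ht⟩ := GraphLine.exists_apply_eq hsx hgt hlt
  exact interior_disjoint_iff.1 hdisj t ⟨hes.trans_lt hst, htx.trans hxe⟩
    ⟨hfs.trans_lt hst, htx.trans hxf⟩ ht

/-- `E` is the edge set of a plane graph on the vertex set `V`. -/
structure IsPlaneGraph (V : Finset Pt2) (E : Finset Segment) : Prop where
  isEdge : ∀ e ∈ E, e.IsEdge V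
  disjoint : (E : Set Segment).PairwiseDisjoint interior

/-- Among the edges in `E` with the same left endpoint as `e`, the edge `g` is the next one after
`e` in increasing order of slopes. -/
structure IsNextSteeper (E : Finset Segment) (e g : Segment) : Prop where
  mem : g ∈ E
  left_eq : g.left = e.left
  slope_lt : e.line.slope < g.line.slope
  slope_le : ∀ f ∈ E, f.left = e.left → e.line.slope < f.line.slope → g.line.slope ≤ f.line.slope

/-- The region between `e` and `g`, over the abscissae that they share, without their common left
endpoint. -/
def wedge (e g : Segment) : Set Pt2 :=
  {z | z 0 ∈ Set.Ioc e.lo (min e.hi g.hi) ∧ z 1 ∈ Set.Icc (e.line (z 0)) (g.line (z 0))}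

/-- `w` is a leftmost vertex in the wedge between `e` and its successor `g` at their common left
endpoint. A plane graph is bounded by charging `e` to `w`. -/
structure IsFirstVertex (V : Finset Pt2) (E : Finset Segment) (e g : Segment) (w : Pt2) :
    Prop where
  next : IsNextSteeper E e g
  mem : w ∈ V
  mem_wedge : w ∈ wedge e g
  le_of_mem_wedge : ∀ z ∈ V, z ∈ wedge e g → w 0 ≤ z 0

variable {V : Finset Pt2} {E : Finset Segment} {e e' f g g' : Segment} {w : Pt2} {x : ℝ}

theorem IsPlaneGraph.disjoint_of_line_lt (hG : IsPlaneGraph V E) (he : e ∈ E) (hf : f ∈ E)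
    (h : e.line x < f.line x) : Disjoint e.interior f.interior :=
  hG.disjoint he hf fun hef ↦ h.ne (by rw [hef])

theorem IsNextSteeper.lo_eq (h : IsNextSteeper E e g) : g.lo = e.lo := congr($h.left_eq 0)

theorem IsNextSteeper.apply_lo_eq (h : IsNextSteeper E e g) : e.line e.lo = g.line e.lo :=
  apply_lo_eq_of_left_eq h.left_eq.symm

theorem IsNextSteeper.line_lt (h : IsNextSteeper E e g) (hx : e.lo < x) :
    e.line x < g.line x :=
  (GraphLine.lt_iff_slope_lt h.apply_lo_eq hx).2 h.slope_lt

theorem IsNextSteeper.not_line_mem_Ioo (h : IsNextSteeper E e g) (hf : f ∈ E)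
    (hleft : f.left = e.left) (hx : e.lo < x) : f.line x ∉ Set.Ioo (e.line x) (g.line x) := by
  rintro ⟨hef, hfg⟩
  have hef_lo := apply_lo_eq_of_left_eq hleft.symm
  have hslope := (GraphLine.lt_iff_slope_lt hef_lo hx).1 hef
  have hslope' := (GraphLine.lt_iff_slope_lt (hef_lo.symm.trans h.apply_lo_eq) hx).1 hfg
  exact (h.slope_le f hf hleft hslope).not_gt hslope'

theorem exists_isNextSteeper
    (h : ∃ f ∈ E, f.left = e.left ∧ e.line.slope < f.line.slope) : ∃ g, IsNextSteeper E e g := by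
  obtain ⟨f, hf⟩ := h
  obtain ⟨g, hg, hmin⟩ := exists_min_image {f ∈ E | f.left = e.left ∧ e.line.slope < f.line.slope}
    (·.line.slope) ⟨f, mem_filter.2 hf⟩
  obtain ⟨hgE, hleft, hslope⟩ := mem_filter.1 hg
  exact ⟨g, hgE, hleft, hslope, fun f hf hl hs ↦ hmin f (mem_filter.2 ⟨hf, hl, hs⟩)⟩

theorem IsNextSteeper.exists_mem_wedge (h : IsNextSteeper E e g) (he : e.IsEdge V)
    (hg : g.IsEdge V) : ∃ z ∈ V, z ∈ wedge e g := by
  rcases le_total e.hi g.hi with hle | hle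
  · exact ⟨e.right, he.right_mem, ⟨e.lo_lt_hi, le_min le_rfl hle⟩, le_rfl,
      (h.line_lt e.lo_lt_hi).le⟩
  · have hlt : e.lo < g.hi := h.lo_eq ▸ g.lo_lt_hi
    exact ⟨g.right, hg.right_mem, ⟨hlt, le_min hle le_rfl⟩, (h.line_lt hlt).le, le_rfl⟩

theorem IsNextSteeper.exists_isFirstVertex (h : IsNextSteeper E e g) (he : e.IsEdge V)
    (hg : g.IsEdge V) : ∃ w, IsFirstVertex V E e g w := by
  classical
  obtain ⟨z, hz⟩ := h.exists_mem_wedge he hg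
  obtain ⟨w, hw, hmin⟩ := exists_min_image {z ∈ V | z ∈ wedge e g} (· 0) ⟨z, mem_filter.2 hz⟩
  obtain ⟨hwV, hwedge⟩ := mem_filter.1 hw
  exact ⟨w, h, hwV, hwedge, fun z hz hzw ↦ hmin z (mem_filter.2 ⟨hz, hzw⟩)⟩

/- An edge strictly between `e` and `g` would have to start in the wedge, contradicting the choice
of `w`, or at the common left endpoint, contradicting the choice of `g`. -/
theorem IsFirstVertex.not_line_mem_Ioo (hw : IsFirstVertex V E e g w) (hG : IsPlaneGraph V E)
    (he : e ∈ E) (hf : f ∈ E) (hxe : x ∈ Set.Ioo e.lo (w 0)) (hxf : x ∈ Set.Ioo f.lo f.hi) :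
    f.line x ∉ Set.Ioo (e.line x) (g.line x) := by
  rintro ⟨hef, hfg⟩
  have hwhi := le_min_iff.1 hw.mem_wedge.1.2
  have hglo := hw.next.lo_eq
  have order_left : ∀ s < x, e.lo ≤ s → f.lo ≤ s →
      e.line s ≤ f.line s ∧ f.line s ≤ g.line s := fun s hsx hes hfs ↦
    ⟨line_le_of_line_lt (hG.disjoint_of_line_lt he hf hef) hes hfs hsx
      (hxe.2.trans_le hwhi.1) hxf.2 hef,
    line_le_of_line_lt (hG.disjoint_of_line_lt hf hw.next.mem hfg) hfs (hglo.trans_le hes) hsx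
      hxf.2 (hxe.2.trans_le hwhi.2) hfg⟩
  rcases lt_or_ge e.lo f.lo with hlt | hle
  · have hwedge : f.left ∈ wedge e g :=
      ⟨⟨hlt, hxf.1.le.trans (hxe.2.le.trans hw.mem_wedge.1.2)⟩,
        order_left f.lo hxf.1 hlt.le le_rfl⟩
    exact (hw.le_of_mem_wedge _ (hG.isEdge f hf).left_mem hwedge).not_gt (hxf.1.trans hxe.2)
  · have hbetween := order_left e.lo hxe.1 le_rfl hle
    have happly : e.line e.lo = f.line e.lo :=
      le_antisymm hbetween.1 (hbetween.2.trans hw.next.apply_lo_eq.ge)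
    rcases hle.lt_or_eq with hlt | heq
    · exact (hG.isEdge f hf).interior_disjoint _ (hG.isEdge e he).left_mem
        (toLp_mem_interior.2 ⟨happly, hlt, hxe.1.trans hxf.2⟩)
    · have hleft : f.left = e.left := by rw [left, left, heq, happly]
      exact hw.next.not_line_mem_Ioo hf hleft hxe.1 ⟨hef, hfg⟩

/- Just to the left of `w`, both `e` and `e'` run below both `g` and `g'`, and neither of `e`, `e'`
can run inside the wedge of the other. -/
theorem IsFirstVertex.unique (hG : IsPlaneGraph V E) (he : e ∈ E) (he' : e' ∈ E)
    (hw : IsFirstVertex V E e g w) (hw' : IsFirstVertex V E e' g' w)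
    (h : w 1 = g.line (w 0) ↔ w 1 = g'.line (w 0)) : e = e' := by
  obtain ⟨⟨hlo, hhi⟩, hew, hwg⟩ := hw.mem_wedge
  obtain ⟨⟨hlo', hhi'⟩, hew', hwg'⟩ := hw'.mem_wedge
  have heg := hw.next.line_lt hlo
  have heg' := hw'.next.line_lt hlo'
  have heg₁ : e.line (w 0) < g'.line (w 0) := by grind
  have heg₂ : e'.line (w 0) < g.line (w 0) := by grind
  have eventually_lt {ℓ ℓ' : GraphLine} (hlt : ℓ (w 0) < ℓ' (w 0)) :
      ∀ᶠ x in 𝓝[<] (w 0), ℓ x < ℓ' x :=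
    nhdsWithin_le_nhds (ℓ.continuous.continuousAt.eventually_lt ℓ'.continuous.continuousAt hlt)
  obtain ⟨x, hxg', hxg, hx, hxw⟩ := ((eventually_lt heg₁).and ((eventually_lt heg₂).and
    (Ioo_mem_nhdsLT (max_lt hlo hlo')))).exists
  obtain ⟨hx, hx'⟩ := max_lt_iff.1 hx
  have hxe : x ∈ Set.Ioo e.lo e.hi := ⟨hx, hxw.trans_le (le_min_iff.1 hhi).1⟩
  have hxe' : x ∈ Set.Ioo e'.lo e'.hi := ⟨hx', hxw.trans_le (le_min_iff.1 hhi').1⟩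
  rcases lt_trichotomy (e.line x) (e'.line x) with hlt | heq | hgt
  · exact (hw.not_line_mem_Ioo hG he he' ⟨hx, hxw⟩ hxe' ⟨hlt, hxg⟩).elim
  · by_contra hne
    exact interior_disjoint_iff.1 (hG.disjoint he he' hne) x hxe hxe' heq
  · exact (hw'.not_line_mem_Ioo hG he' he ⟨hx', hxw⟩ hxe ⟨hgt, hxg'⟩).elim

/-- The edges in `E` that no other edge in `E` with the same left endpoint exceeds in slope. -/
def steepest (E : Finset Segment) : Finset Segment :=
  {e ∈ E | ∀ f ∈ E, f.left = e.left → f.line.slope ≤ e.line.slope}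

theorem card_steepest_le (hE : ∀ e ∈ E, e.IsEdge V) : #(steepest E) ≤ #V := by
  refine card_le_card_of_injOn left (fun e he ↦ (hE e (mem_filter.1 he).1).left_mem) ?_
  intro e he f hf hleft
  obtain ⟨he, hemax⟩ := mem_filter.1 he
  obtain ⟨hf, hfmax⟩ := mem_filter.1 hf
  exact (hE e he).eq_of_left_eq_of_slope_eq (hE f hf) hleft
    (le_antisymm (hfmax e he hleft) (hemax f hf hleft.symm))

theorem IsPlaneGraph.card_sdiff_steepest_le (hG : IsPlaneGraph V E) :
    #(E \ steepest E) ≤ 2 * #V := by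
  have hcard : #(V ×ˢ (univ : Finset Prop)) = 2 * #V := by
    rw [card_product, card_univ, Fintype.card_prop, mul_comm]
  rw [← hcard]
  refine card_le_card_of_forall_subsingleton
    (fun e w ↦ ∃ g, IsFirstVertex V E e g w.1 ∧ (w.2 ↔ w.1 1 = g.line (w.1 0))) ?_ ?_
  · intro e he
    obtain ⟨heE, hsteep⟩ := mem_sdiff.1 he
    simp only [steepest, mem_filter, heE, true_and, not_forall, not_le, exists_prop] at hsteep
    obtain ⟨g, hg⟩ := exists_isNextSteeper hsteep
    obtain ⟨w, hw⟩ := hg.exists_isFirstVertex (hG.isEdge e heE) (hG.isEdge g hg.mem)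
    exact ⟨(w, w 1 = g.line (w 0)), mem_product.2 ⟨hw.mem, mem_univ _⟩, g, hw, Iff.rfl⟩
  · rintro ⟨w, b⟩ - e ⟨he, g, hw, hb⟩ e' ⟨he', g', hw', hb'⟩
    exact hw.unique hG (mem_sdiff.1 he).1 (mem_sdiff.1 he').1 hw' (hb.symm.trans hb')

theorem IsPlaneGraph.card_le (hG : IsPlaneGraph V E) : #E ≤ 3 * #V := by
  have hsplit : #E ≤ #(E \ steepest E) + #(steepest E) := card_le_card_sdiff_add_card
  have hsteepest := card_steepest_le hG.isEdge
  have hrest := hG.card_sdiff_steepest_le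
  omega

open Classical in
/-- The ordered pairs of distinct segments in `E` that cross. -/
def crossings (E : Finset Segment) : Finset (Segment × Segment) :=
  {q ∈ E.offDiag | ¬Disjoint q.1.interior q.2.interior}

/-- The two endpoints of a segment. -/
def endpoints (e : Segment) : Finset Pt2 := {e.left, e.right}

theorem mem_crossings {q : Segment × Segment} : q ∈ crossings E ↔
    q.1 ∈ E ∧ q.2 ∈ E ∧ q.1 ≠ q.2 ∧ ¬Disjoint q.1.interior q.2.interior := by
  classical
  rw [crossings, mem_filter, mem_offDiag, and_assoc, and_assoc]

theorem endpoints_subset_iff : e.endpoints ⊆ V ↔ e.left ∈ V ∧ e.right ∈ V := by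
  rw [endpoints, insert_subset_iff, singleton_subset_iff]

theorem card_endpoints (e : Segment) : #e.endpoints = 2 :=
  card_pair fun h ↦ e.lo_lt_hi.ne congr($h 0)

theorem IsEdge.endpoints_subset (he : e.IsEdge V) : e.endpoints ⊆ V :=
  endpoints_subset_iff.2 ⟨he.left_mem, he.right_mem⟩

theorem IsEdge.line_ne (he : e.IsEdge V) (hf : f.IsEdge V) (hne : e ≠ f)
    (hcross : ¬Disjoint e.interior f.interior) : e.line ≠ f.line := fun hline ↦ by
  obtain ⟨z, hze, hzf⟩ := Set.not_disjoint_iff.1 hcross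
  exact hne (he.eq_of_line_eq hf hline (hze.2.1.trans hzf.2.2) (hzf.2.1.trans hze.2.2))

theorem IsEdge.disjoint_endpoints (he : e.IsEdge V) (hf : f.IsEdge V) (hne : e ≠ f)
    (hcross : ¬Disjoint e.interior f.interior) : Disjoint e.endpoints f.endpoints := by
  obtain ⟨z, ⟨hze, hzlo, hzhi⟩, hzf, -⟩ := Set.not_disjoint_iff.1 hcross
  have common_point {x y : ℝ} (h : !₂[x, e.line x] = !₂[y, f.line y]) : x = z 0 := by
    obtain rfl : x = y := congr($h 0)
    have heq : e.line x = f.line x := congr($h 1)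
    by_contra hx
    exact he.line_ne hf hne hcross (GraphLine.eq_of_apply_eq hx heq (hze.symm.trans hzf))
  simp only [endpoints, disjoint_insert_left, disjoint_singleton_left, mem_insert, mem_singleton]
  exact ⟨not_or.2 ⟨fun h ↦ hzlo.ne (common_point h), fun h ↦ hzlo.ne (common_point h)⟩,
    not_or.2 ⟨fun h ↦ hzhi.ne' (common_point h), fun h ↦ hzhi.ne' (common_point h)⟩⟩

theorem card_le_add_card_crossings (hE : ∀ e ∈ E, e.IsEdge V) :
    #E ≤ 3 * #V + #(crossings E) := by
  have hplane : IsPlaneGraph V (E \ (crossings E).image Prod.fst) := by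
    refine ⟨fun e he ↦ hE e (mem_sdiff.1 he).1, fun e he f hf hne ↦ ?_⟩
    obtain ⟨heE, he⟩ := mem_sdiff.1 he
    by_contra hcross
    exact he (mem_image.2
      ⟨(e, f), mem_crossings.2 ⟨heE, (mem_sdiff.1 hf).1, hne, hcross⟩, rfl⟩)
  calc #E ≤ #(E \ (crossings E).image Prod.fst) + #((crossings E).image Prod.fst) :=
        card_le_card_sdiff_add_card
    _ ≤ 3 * #V + #(crossings E) := Nat.add_le_add hplane.card_le card_image_le

theorem card_induced_le (hE : ∀ e ∈ E, e.IsEdge V) {S : Finset Pt2} (hS : S ⊆ V) :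
    #{e ∈ E | e.endpoints ⊆ S} ≤
      3 * #S + #{q ∈ crossings E | q.1.endpoints ∪ q.2.endpoints ⊆ S} := by
  have hedge : ∀ e ∈ ({e ∈ E | e.endpoints ⊆ S} : Finset Segment), e.IsEdge S := fun e he ↦ by
    obtain ⟨heE, heS⟩ := mem_filter.1 he
    obtain ⟨hleft, hright⟩ := endpoints_subset_iff.1 heS
    exact ⟨hleft, hright, fun z hz ↦ (hE e heE).interior_disjoint z (hS hz)⟩
  refine (card_le_add_card_crossings hedge).trans (Nat.add_le_add_left (card_le_card ?_) _)
  intro q hq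
  simp only [mem_crossings, mem_filter, union_subset_iff] at hq ⊢
  tauto

/- The inequality `card_induced_le`, averaged over random sets `S` of vertices: a vertex, an edge
and a crossing survive with probability `p`, `p ^ 2` and `p ^ 4`. -/
theorem crossing_inequality (hE : ∀ e ∈ E, e.IsEdge V) {p : ℝ} (hp₀ : 0 ≤ p) (hp₁ : p ≤ 1) :
    p ^ 2 * #E ≤ 3 * (p * #V) + p ^ 4 * #(crossings E) := by
  have weight_nonneg (S : Finset Pt2) : 0 ≤ samplingWeight p V S :=
    mul_nonneg (pow_nonneg hp₀ _) (pow_nonneg (sub_nonneg.2 hp₁) _)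
  have expected_edges : ∑ S ∈ V.powerset, samplingWeight p V S * #{e ∈ E | e.endpoints ⊆ S} =
      p ^ 2 * #E :=
    sum_samplingWeight_mul_card p (fun e he ↦ (hE e he).endpoints_subset)
      fun e _ ↦ e.card_endpoints
  have expected_vertices : ∑ S ∈ V.powerset, samplingWeight p V S * #S = p * #V := by
    have h := sum_samplingWeight_mul_card p (V := V) (F := V) (T := fun v ↦ {v})
      (fun v hv ↦ singleton_subset_iff.2 hv) fun v _ ↦ card_singleton v
    rw [pow_one] at h
    rw [← h]
    refine sum_congr rfl fun S hS ↦ ?_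
    simp only [singleton_subset_iff, filter_mem_eq_inter, inter_eq_right.2 (mem_powerset.1 hS)]
  have expected_crossings : ∑ S ∈ V.powerset, samplingWeight p V S *
      #{q ∈ crossings E | q.1.endpoints ∪ q.2.endpoints ⊆ S} = p ^ 4 * #(crossings E) := by
    refine sum_samplingWeight_mul_card p (fun q hq ↦ ?_) fun q hq ↦ ?_ <;>
      obtain ⟨he, hf, hne, hcross⟩ := mem_crossings.1 hq
    · exact union_subset (hE _ he).endpoints_subset (hE _ hf).endpoints_subset
    · rw [card_union_of_disjoint ((hE _ he).disjoint_endpoints (hE _ hf) hne hcross),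
        card_endpoints, card_endpoints]
  rw [← expected_edges, ← expected_vertices, ← expected_crossings, mul_sum, ← sum_add_distrib]
  refine sum_le_sum fun S hS ↦ ?_
  rw [mul_left_comm, ← mul_add]
  exact mul_le_mul_of_nonneg_left
    (mod_cast card_induced_le hE (mem_powerset.1 hS)) (weight_nonneg S)

variable {P : Finset Pt2} {L : Finset GraphLine}

theorem eq_of_left_eq_of_right_eq (hline : e.line = f.line) (hleft : e.left = f.left)
    (hright : e.right = f.right) : e = f :=
  Segment.ext hline congr($hleft 0) congr($hright 0)

theorem finite_isEdge_line_mem (P : Finset Pt2) (L : Finset GraphLine) :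
    {e : Segment | e.line ∈ L ∧ e.IsEdge P}.Finite := by
  refine Set.Finite.of_injOn (f := fun e ↦ (e.line, e.left, e.right))
    (t := (L ×ˢ P ×ˢ P : Finset (GraphLine × Pt2 × Pt2))) ?_ ?_ (finite_toSet _)
  · exact fun e he ↦ mem_product.2 ⟨he.1, mem_product.2 ⟨he.2.left_mem, he.2.right_mem⟩⟩
  · intro e _ f _ h
    simp only [Prod.mk.injEq] at h
    exact eq_of_left_eq_of_right_eq h.1 h.2.1 h.2.2

/-- The segments joining consecutive points of `P` on the lines in `L`. -/
def edgesOn (P : Finset Pt2) (L : Finset GraphLine) : Finset Segment :=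
  (finite_isEdge_line_mem P L).toFinset

theorem mem_edgesOn : e ∈ edgesOn P L ↔ e.line ∈ L ∧ e.IsEdge P :=
  (finite_isEdge_line_mem P L).mem_toFinset

theorem card_crossings_edgesOn_le : #(crossings (edgesOn P L)) ≤ #L ^ 2 := by
  rw [sq, ← card_product]
  refine card_le_card_of_injOn (fun q ↦ (q.1.line, q.2.line)) ?_ ?_
  · intro q hq
    obtain ⟨he, hf, -⟩ := mem_crossings.1 hq
    exact mem_product.2 ⟨(mem_edgesOn.1 he).1, (mem_edgesOn.1 hf).1⟩
  · rintro ⟨e, f⟩ hq ⟨e', f'⟩ hq' hlines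
    obtain ⟨he, hf, hne, hcross⟩ := mem_crossings.1 hq
    obtain ⟨he', hf', -, hcross'⟩ := mem_crossings.1 hq'
    replace he := (mem_edgesOn.1 he).2
    replace hf := (mem_edgesOn.1 hf).2
    replace he' := (mem_edgesOn.1 he').2
    replace hf' := (mem_edgesOn.1 hf').2
    obtain ⟨hee', hff'⟩ : e.line = e'.line ∧ f.line = f'.line := Prod.ext_iff.1 hlines
    obtain ⟨z, ⟨hze, hzeI⟩, hzf, hzfI⟩ := Set.not_disjoint_iff.1 hcross
    obtain ⟨z', ⟨hze', hzeI'⟩, hzf', hzfI'⟩ := Set.not_disjoint_iff.1 hcross'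
    have same_crossing : z 0 = z' 0 := by
      by_contra hz
      refine he.line_ne hf hne hcross
        (GraphLine.eq_of_apply_eq hz (hze.symm.trans hzf) ?_)
      rw [hee', hff']
      exact hze'.symm.trans hzf'
    rw [← same_crossing] at hzeI' hzfI'
    exact Prod.ext
      (he.eq_of_line_eq he' hee' (hzeI.1.trans hzeI'.2) (hzeI'.1.trans hzeI.2))
      (hf.eq_of_line_eq hf' hff' (hzfI.1.trans hzfI'.2) (hzfI'.1.trans hzfI.2))

theorem exists_isEdge_left_eq {ℓ : GraphLine} {z r : Pt2} (hz : z ∈ P) (hr : r ∈ P)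
    (hzℓ : z ∈ ℓ.graph) (hrℓ : r ∈ ℓ.graph) (hlt : z 0 < r 0) :
    ∃ e : Segment, e.IsEdge P ∧ e.left = z ∧ e.line = ℓ := by
  classical
  obtain ⟨s, hs, hmin⟩ := exists_min_image {s ∈ P | s ∈ ℓ.graph ∧ z 0 < s 0} (· 0)
    ⟨r, mem_filter.2 ⟨hr, hrℓ, hlt⟩⟩
  obtain ⟨hsP, hsℓ, hzs⟩ := mem_filter.1 hs
  let e : Segment := ⟨ℓ, z 0, s 0, hzs⟩
  have hleft : e.left = z := ℓ.toLp_eq_of_mem_graph hzℓ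
  have hright : e.right = s := ℓ.toLp_eq_of_mem_graph hsℓ
  refine ⟨e, ⟨hleft.symm ▸ hz, hright.symm ▸ hsP, ?_⟩, hleft, rfl⟩
  rintro t ht ⟨htℓ, hzt, hts⟩
  exact (hmin t (mem_filter.2 ⟨ht, htℓ, hzt⟩)).not_gt hts

end Segment

open Classical in
/-- The pairs of a point in `P` and a set in `L` that contains it. -/
def incidences (P : Finset Pt2) (L : Finset (Set Pt2)) : Finset (Pt2 × Set Pt2) :=
  {q ∈ P ×ˢ L | q.1 ∈ q.2}

open Classical in
/-- The pairs of a point in `P` and a non-vertical line in `L` through it. -/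
def graphIncidences (P : Finset Pt2) (L : Finset GraphLine) : Finset (Pt2 × GraphLine) :=
  {q ∈ P ×ˢ L | q.1 ∈ q.2.graph}

open Segment

variable {P : Finset Pt2} {L : Finset GraphLine}

theorem mem_incidences {L : Finset (Set Pt2)} {q : Pt2 × Set Pt2} :
    q ∈ incidences P L ↔ q.1 ∈ P ∧ q.2 ∈ L ∧ q.1 ∈ q.2 := by
  classical
  rw [incidences, mem_filter, mem_product, and_assoc]

theorem mem_graphIncidences {q : Pt2 × GraphLine} :
    q ∈ graphIncidences P L ↔ q.1 ∈ P ∧ q.2 ∈ L ∧ q.1 ∈ q.2.graph := by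
  classical
  rw [graphIncidences, mem_filter, mem_product, and_assoc]

theorem card_graphIncidences_le_card_edgesOn_add (P : Finset Pt2) (L : Finset GraphLine) :
    #(graphIncidences P L) ≤ #(edgesOn P L) + #L := by
  set starts := (edgesOn P L).image fun e ↦ (e.left, e.line)
  have rightmost : ∀ q ∈ graphIncidences P L \ starts, ∀ r ∈ graphIncidences P L, q.2 = r.2 →
      r.1 0 ≤ q.1 0 := fun q hq r hr hqr ↦ by
    by_contra! hlt
    obtain ⟨hq, hstart⟩ := mem_sdiff.1 hq
    obtain ⟨hqP, hqL, hq⟩ := mem_graphIncidences.1 hq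
    obtain ⟨hrP, -, hr⟩ := mem_graphIncidences.1 hr
    obtain ⟨e, he, hleft, hline⟩ := exists_isEdge_left_eq hqP hrP hq (hqr ▸ hr) hlt
    exact hstart (mem_image.2 ⟨e, mem_edgesOn.2 ⟨hline ▸ hqL, he⟩, Prod.ext hleft hline⟩)
  have card_rest : #(graphIncidences P L \ starts) ≤ #L := by
    refine card_le_card_of_injOn Prod.snd
      (fun q hq ↦ (mem_graphIncidences.1 (mem_sdiff.1 hq).1).2.1) ?_
    intro q hq r hr hqr
    have hq' := (mem_sdiff.1 hq).1
    have hr' := (mem_sdiff.1 hr).1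
    have habscissa := le_antisymm (rightmost r hr q hq' hqr.symm) (rightmost q hq r hr' hqr)
    refine Prod.ext ?_ hqr
    rw [← q.2.toLp_eq_of_mem_graph (mem_graphIncidences.1 hq').2.2,
      ← r.2.toLp_eq_of_mem_graph (mem_graphIncidences.1 hr').2.2, hqr, habscissa]
  calc #(graphIncidences P L) ≤ #(graphIncidences P L \ starts) + #starts :=
        card_le_card_sdiff_add_card
    _ ≤ #L + #(edgesOn P L) := Nat.add_le_add card_rest card_image_le
    _ = #(edgesOn P L) + #L := Nat.add_comm _ _

theorem sq_mul_card_graphIncidences_sub_le (P : Finset Pt2) (L : Finset GraphLine) {p : ℝ}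
    (hp₀ : 0 ≤ p) (hp₁ : p ≤ 1) :
    p ^ 2 * (#(graphIncidences P L) - #L) ≤ 3 * (p * #P) + p ^ 4 * #L ^ 2 := by
  have hedges : (#(graphIncidences P L) : ℝ) ≤ #(edgesOn P L) + #L :=
    mod_cast card_graphIncidences_le_card_edgesOn_add P L
  have hcrossings : (#(crossings (edgesOn P L)) : ℝ) ≤ #L ^ 2 :=
    mod_cast card_crossings_edgesOn_le
  calc p ^ 2 * (#(graphIncidences P L) - #L)
    _ ≤ p ^ 2 * #(edgesOn P L) := by gcongr; linarith
    _ ≤ 3 * (p * #P) + p ^ 4 * #(crossings (edgesOn P L)) :=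
      crossing_inequality (fun e he ↦ (mem_edgesOn.1 he).2) hp₀ hp₁
    _ ≤ 3 * (p * #P) + p ^ 4 * #L ^ 2 := by gcongr

/- Take `p = 1` if `b ^ 2 ≤ a` and `p = a / b ^ 2` otherwise. -/
theorem le_of_forall_sq_mul_sub_le {a b I : ℝ} (ha : 0 < a)
    (h : ∀ p : ℝ, 0 ≤ p → p ≤ 1 → p ^ 2 * (I - b ^ 3) ≤ 3 * (p * a ^ 3) + p ^ 4 * (b ^ 3) ^ 2) :
    I ≤ 4 * (a ^ 2 * b ^ 2) + 4 * a ^ 3 + b ^ 3 := by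
  rcases le_total (b ^ 2) a with hba | hab
  · have hcube : (b ^ 2) ^ 3 ≤ a ^ 3 := by gcongr
    have hone := h 1 zero_le_one le_rfl
    have : 0 ≤ a ^ 2 * b ^ 2 := by positivity
    linarith [show (b ^ 2) ^ 3 = (b ^ 3) ^ 2 by ring]
  · have hb : 0 < b ^ 2 := ha.trans_le hab
    have hb₀ : b ≠ 0 := by
      rintro rfl
      simp at hb
    set p := a / b ^ 2
    have hp : 0 < p := div_pos ha hb
    have hrhs : 3 * (p * a ^ 3) + p ^ 4 * (b ^ 3) ^ 2 = p ^ 2 * (4 * (a ^ 2 * b ^ 2)) := by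
      simp only [p]
      field_simp
      norm_num
    have hsub : I - b ^ 3 ≤ 4 * (a ^ 2 * b ^ 2) :=
      le_of_mul_le_mul_left ((h p hp.le ((div_le_one hb).2 hab)).trans_eq hrhs) (pow_pos hp 2)
    have : 0 < a ^ 3 := pow_pos ha 3
    linarith

theorem exists_pow_three_eq {x : ℝ} (hx : 0 ≤ x) :
    ∃ a : ℝ, 0 ≤ a ∧ a ^ 3 = x ∧ a ^ 2 = x ^ ((2 : ℝ) / 3) := by
  refine ⟨x ^ ((1 : ℝ) / 3), by positivity, ?_, ?_⟩ <;>
    rw [← Real.rpow_mul_natCast hx] <;> norm_num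

theorem card_graphIncidences_le (P : Finset Pt2) (L : Finset GraphLine) :
    (#(graphIncidences P L) : ℝ) ≤
      4 * ((#P : ℝ) ^ ((2 : ℝ) / 3) * (#L : ℝ) ^ ((2 : ℝ) / 3)) + 4 * #P + #L := by
  rcases P.eq_empty_or_nonempty with rfl | hP
  · simp only [graphIncidences, empty_product, filter_empty, card_empty, Nat.cast_zero]
    positivity
  obtain ⟨a, ha, ha₃, ha₂⟩ := exists_pow_three_eq (Nat.cast_nonneg (α := ℝ) #P)
  obtain ⟨b, -, hb₃, hb₂⟩ := exists_pow_three_eq (Nat.cast_nonneg (α := ℝ) #L)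
  have ha_pos : 0 < a := ha.lt_of_ne' <| by
    rintro rfl
    exact hP.card_ne_zero (by simpa using ha₃.symm)
  rw [← ha₂, ← hb₂, ← ha₃, ← hb₃]
  refine le_of_forall_sq_mul_sub_le ha_pos fun p hp₀ hp₁ ↦ ?_
  rw [ha₃, hb₃]
  exact sq_mul_card_graphIncidences_sub_le P L hp₀ hp₁

theorem IsLine2.exists_graph_eq_or_vertical {l : Set Pt2} (hl : IsLine2 l) :
    (∃ ℓ : GraphLine, ℓ.graph = l) ∨ ∃ c : ℝ, l = {z | z 0 = c} := by
  obtain ⟨a, v, hv, rfl⟩ := hl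
  by_cases hv₀ : v 0 = 0
  · have hv₁ : v 1 ≠ 0 := fun hv₁ ↦ hv (by ext i; fin_cases i <;> assumption)
    refine Or.inr ⟨a 0, Set.ext fun z ↦ ⟨?_, fun hz ↦ ⟨(z 1 - a 1) / v 1, ?_⟩⟩⟩
    · rintro ⟨t, rfl⟩
      simp [hv₀]
    · replace hz : z 0 = a 0 := hz
      ext i
      fin_cases i <;> simp [hv₀, hv₁, hz]
  · refine Or.inl ⟨⟨v 1 / v 0, a 1 - v 1 / v 0 * a 0⟩,
      Set.ext fun z ↦ ⟨fun hz ↦ ⟨(z 0 - a 0) / v 0, ?_⟩, ?_⟩⟩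
    · replace hz : z 1 = v 1 / v 0 * z 0 + (a 1 - v 1 / v 0 * a 0) := hz
      ext i
      fin_cases i
      · simp [hv₀]
      · simp only [hz, PiLp.add_apply, PiLp.smul_apply, smul_eq_mul, Fin.mk_one]
        field
    · rintro ⟨t, rfl⟩
      simp only [GraphLine.graph, Set.mem_ofPred_eq, PiLp.add_apply, PiLp.smul_apply, smul_eq_mul]
      field

theorem szemeredi_trotter (P : Finset Pt2) {L : Finset (Set Pt2)} (hL : ∀ l ∈ L, IsLine2 l) :
    (#(incidences P L) : ℝ) ≤
      4 * ((#P : ℝ) ^ ((2 : ℝ) / 3) * (#L : ℝ) ^ ((2 : ℝ) / 3)) + 5 * #P + #L := by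
  classical
  set graphs := L.preimage GraphLine.graph GraphLine.graph_injective.injOn
  set vertical := {q ∈ incidences P L | ∃ c : ℝ, q.2 = {z | z 0 = c}}
  have hcover : incidences P L ⊆
      (graphIncidences P graphs).image (Prod.map id GraphLine.graph) ∪ vertical := by
    rintro ⟨z, l⟩ hq
    obtain ⟨hz, hl, hzl⟩ := mem_incidences.1 hq
    rcases (hL l hl).exists_graph_eq_or_vertical with ⟨ℓ, rfl⟩ | hvert
    · exact mem_union_left _ (mem_image.2
        ⟨(z, ℓ), mem_graphIncidences.2 ⟨hz, mem_preimage.2 hl, hzl⟩, rfl⟩)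
    · exact mem_union_right _ (mem_filter.2 ⟨hq, hvert⟩)
  have card_vertical : #vertical ≤ #P := by
    refine card_le_card_of_injOn Prod.fst
      (fun q hq ↦ (mem_incidences.1 (mem_filter.1 hq).1).1) ?_
    rintro ⟨z, l⟩ hq ⟨z', l'⟩ hq' (rfl : z = z')
    obtain ⟨hq, c, rfl⟩ := mem_filter.1 hq
    obtain ⟨hq', c', rfl⟩ := mem_filter.1 hq'
    obtain rfl : z 0 = c := (mem_incidences.1 hq).2.2
    obtain rfl : z 0 = c' := (mem_incidences.1 hq').2.2
    rfl
  have card_graphs : #graphs ≤ #L :=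
    card_le_card_of_injOn _ (fun ℓ hℓ ↦ mem_preimage.1 hℓ) GraphLine.graph_injective.injOn
  have hcard : (#(incidences P L) : ℝ) ≤ #(graphIncidences P graphs) + #P :=
    mod_cast (card_le_card hcover).trans <| (card_union_le _ _).trans <|
      Nat.add_le_add card_image_le card_vertical
  calc (#(incidences P L) : ℝ)
    _ ≤ 4 * ((#P : ℝ) ^ ((2 : ℝ) / 3) * (#graphs : ℝ) ^ ((2 : ℝ) / 3)) + 4 * #P + #graphs + #P := by
      grw [hcard, card_graphIncidences_le]
    _ ≤ 4 * ((#P : ℝ) ^ ((2 : ℝ) / 3) * (#L : ℝ) ^ ((2 : ℝ) / 3)) + 4 * #P + #L + #P := by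
      gcongr
    _ = _ := by ring

section Translates

variable {E : Type*} [NormedAddCommGroup E] [InnerProductSpace ℝ E]

theorem exists_norm_eq_one_and_eq_span_singleton {K : Submodule ℝ E}
    (hK : Module.finrank ℝ K = 1) : ∃ u : E, ‖u‖ = 1 ∧ K = ℝ ∙ u := by
  obtain ⟨v, hv⟩ := finrank_eq_one_iff'.1 hK
  have hv₀ : (v : E) ≠ 0 := fun h ↦ hv.1 (Subtype.ext h)
  refine ⟨‖(v : E)‖⁻¹ • v, norm_smul_inv_norm hv₀, ?_⟩
  rw [Submodule.span_singleton_smul_eq (inv_ne_zero (norm_ne_zero_iff.2 hv₀)).isUnit]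
  refine le_antisymm (fun w hw ↦ ?_) ((Submodule.span_singleton_le_iff_mem _ _).2 v.2)
  obtain ⟨c, hc⟩ := hv.2 ⟨w, hw⟩
  exact Submodule.mem_span_singleton.2 ⟨c, congrArg Subtype.val hc⟩

theorem mem_vadd_of_infDist_eq {s : AffineSubspace ℝ E} [Nonempty s]
    [s.direction.HasOrthogonalProjection] {u p : E} {d : ℝ} (hu : ‖u‖ = 1)
    (hspan : s.directionᗮ = ℝ ∙ u) (hp : Metric.infDist p s = d) :
    p ∈ d • u +ᵥ (s : Set E) ∨ p ∈ (-d) • u +ᵥ (s : Set E) := by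
  set f : E := (EuclideanGeometry.orthogonalProjection s p).1
  have hf : f ∈ s := EuclideanGeometry.orthogonalProjection_mem p
  have hperp : p - f ∈ s.directionᗮ :=
    EuclideanGeometry.vsub_orthogonalProjection_mem_direction_orthogonal s p
  obtain ⟨c, hc⟩ := Submodule.mem_span_singleton.1 (hspan ▸ hperp)
  have habs : |c| = d := by
    rw [← hp, ← EuclideanGeometry.dist_orthogonalProjection_eq_infDist, dist_eq_norm]
    change |c| = ‖p - f‖
    rw [← hc, norm_smul, hu, mul_one, Real.norm_eq_abs]
  have hmem : p ∈ c • u +ᵥ (s : Set E) := ⟨f, hf, by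
    change c • u + f = p
    rw [hc, sub_add_cancel]⟩
  rcases abs_choice c with h | h
  · left; rwa [← habs, h]
  · right; rwa [← habs, h, neg_neg]

/-- The translate of `s` by the vector that `u` assigns to the direction of `s`. -/
def directionTranslate (u : Submodule ℝ E → E) (s : Set E) : Set E := u (vectorSpan ℝ s) +ᵥ s

theorem directionTranslate_injective (u : Submodule ℝ E → E) :
    Function.Injective (directionTranslate u) := fun s t h ↦ by
  have hspan (s : Set E) : vectorSpan ℝ (directionTranslate u s) = vectorSpan ℝ s := by
    have hsub : (directionTranslate u s) -ᵥ (directionTranslate u s) = s -ᵥ s := by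
      ext x
      simp [directionTranslate, Set.mem_vsub]
    rw [vectorSpan, hsub, vectorSpan]
  have hst : vectorSpan ℝ s = vectorSpan ℝ t := by rw [← hspan s, h, hspan]
  rw [directionTranslate, directionTranslate, hst] at h
  exact vadd_left_cancel _ h

end Translates

theorem IsLine2.vadd {l : Set Pt2} (hl : IsLine2 l) (w : Pt2) : IsLine2 (w +ᵥ l) := by
  obtain ⟨a, v, hv, rfl⟩ := hl
  refine ⟨w + a, v, hv, ?_⟩
  ext x
  simp [Set.mem_vadd_set, add_assoc, eq_comm]

theorem IsLine2.exists_affineSubspace {l : Set Pt2} (hl : IsLine2 l) :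
    ∃ s : AffineSubspace ℝ Pt2, (s : Set Pt2) = l ∧ Nonempty s ∧
      Module.finrank ℝ s.direction = 1 := by
  obtain ⟨a, v, hv, rfl⟩ := hl
  refine ⟨AffineSubspace.mk' a (ℝ ∙ v), ?_, ⟨a, AffineSubspace.self_mem_mk' _ _⟩, ?_⟩
  · ext x
    simp [AffineSubspace.mem_mk', Submodule.mem_span_singleton, eq_sub_iff_add_eq, add_comm,
      eq_comm]
  · rw [AffineSubspace.direction_mk', finrank_span_singleton hv]

theorem exists_unit_normal : ∃ u : Submodule ℝ Pt2 → Pt2, ∀ W : Submodule ℝ Pt2,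
    Module.finrank ℝ W = 1 → ‖u W‖ = 1 ∧ Wᗮ = ℝ ∙ u W := by
  have h (W : Submodule ℝ Pt2) : ∃ u : Pt2, Module.finrank ℝ W = 1 → ‖u‖ = 1 ∧ Wᗮ = ℝ ∙ u := by
    by_cases hW : Module.finrank ℝ W = 1
    · have hrank := W.finrank_add_finrank_orthogonal
      rw [hW, finrank_euclideanSpace_fin] at hrank
      obtain ⟨u, hu⟩ := exists_norm_eq_one_and_eq_span_singleton (K := Wᗮ) (by omega)
      exact ⟨u, fun _ ↦ hu⟩
    · exact ⟨0, fun h ↦ (hW h).elim⟩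
  choose u hu using h
  exact ⟨u, hu⟩

open Classical in
theorem card_filter_mem_apply_le (P : Finset Pt2) (L : Finset (Set Pt2)) {τ : Set Pt2 → Set Pt2}
    (hτ : τ.Injective) (hL : ∀ l ∈ L, IsLine2 (τ l)) :
    (#{q ∈ P ×ˢ L | q.1 ∈ τ q.2} : ℝ) ≤
      4 * ((#P : ℝ) ^ ((2 : ℝ) / 3) * (#L : ℝ) ^ ((2 : ℝ) / 3)) + 5 * #P + #L := by
  have hcard : #{q ∈ P ×ˢ L | q.1 ∈ τ q.2} ≤ #(incidences P (L.image τ)) := by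
    refine card_le_card_of_injOn (Prod.map id τ) (fun q hq ↦ ?_)
      (Function.injective_id.prodMap hτ).injOn
    obtain ⟨hq, hmem⟩ := mem_filter.1 hq
    obtain ⟨hz, hl⟩ := mem_product.1 hq
    exact mem_incidences.2 ⟨hz, mem_image_of_mem τ hl, hmem⟩
  grw [hcard, szemeredi_trotter P (forall_mem_image.2 hL), card_image_of_injective L hτ]

theorem IsLine2.mem_directionTranslate_of_infDist_eq {u : Submodule ℝ Pt2 → Pt2}
    (hu : ∀ W : Submodule ℝ Pt2, Module.finrank ℝ W = 1 → ‖u W‖ = 1 ∧ Wᗮ = ℝ ∙ u W)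
    {l : Set Pt2} (hl : IsLine2 l) {p : Pt2} {d : ℝ} (hp : Metric.infDist p l = d) :
    p ∈ directionTranslate (fun W ↦ d • u W) l ∨ p ∈ directionTranslate (fun W ↦ (-d) • u W) l := by
  obtain ⟨s, rfl, hne, hrank⟩ := hl.exists_affineSubspace
  obtain ⟨hnorm, hspan⟩ := hu s.direction hrank
  exact mem_vadd_of_infDist_eq hnorm hspan hp

theorem repeated_point_line_distances_general (P : Finset Pt2) {L : Finset (Set Pt2)}
    (hL : ∀ l ∈ L, IsLine2 l) (d : ℝ) :
    ({q : Pt2 × Set Pt2 | q.1 ∈ P ∧ q.2 ∈ L ∧ Metric.infDist q.1 q.2 = d}.ncard : ℝ) ≤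
      10 * ((#P : ℝ) ^ ((2 : ℝ) / 3) * (#L : ℝ) ^ ((2 : ℝ) / 3) + #P + #L) := by
  obtain ⟨u, hu⟩ := exists_unit_normal
  classical
  set translate := fun c : ℝ ↦ directionTranslate fun W ↦ c • u W
  set pairs := fun c : ℝ ↦ {q ∈ P ×ˢ L | q.1 ∈ translate c q.2}
  have hpairs (c : ℝ) := card_filter_mem_apply_le P L (τ := translate c)
    (directionTranslate_injective _) fun l hl ↦ (hL l hl).vadd _
  have hcover : {q : Pt2 × Set Pt2 | q.1 ∈ P ∧ q.2 ∈ L ∧ Metric.infDist q.1 q.2 = d} ⊆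
      ↑(pairs d ∪ pairs (-d)) := by
    rintro ⟨p, l⟩ ⟨hp, hl, hdist⟩
    have hq := mem_product.2 ⟨hp, hl⟩
    exact mem_union.2 (((hL l hl).mem_directionTranslate_of_infDist_eq hu hdist).imp
      (fun h ↦ mem_filter.2 ⟨hq, h⟩) fun h ↦ mem_filter.2 ⟨hq, h⟩)
  have hcard : ({q : Pt2 × Set Pt2 |
      q.1 ∈ P ∧ q.2 ∈ L ∧ Metric.infDist q.1 q.2 = d}.ncard : ℝ) ≤ #(pairs d) + #(pairs (-d)) :=
    mod_cast (Set.ncard_le_ncard hcover (finite_toSet _)).trans <|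
      (Set.ncard_coe_finset _).trans_le (card_union_le _ _)
  have : 0 ≤ (#P : ℝ) ^ ((2 : ℝ) / 3) * (#L : ℝ) ^ ((2 : ℝ) / 3) := by positivity
  linarith [hpairs d, hpairs (-d), Nat.cast_nonneg (α := ℝ) #L]

theorem repeated_point_line_distances :
    ∃ A : ℝ, 0 < A ∧
      ∀ (m n : ℕ) (P : Finset Pt2) (L : Finset (Set Pt2)),
        P.card = m → L.card = n → (∀ l ∈ L, IsLine2 l) →
        (({q : Pt2 × Set Pt2 | q.1 ∈ P ∧ q.2 ∈ L ∧ Metric.infDist q.1 q.2 = 1}).ncard : ℝ) ≤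
          A * ((m : ℝ) ^ ((2 : ℝ) / 3) * (n : ℝ) ^ ((2 : ℝ) / 3) + (m : ℝ) + (n : ℝ)) := by
  refine ⟨10, by norm_num, ?_⟩
  rintro _ _ P L rfl rfl hL
  exact repeated_point_line_distances_general P hL 1
end
end
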